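/- arXiv:1104.0829 — 2 statements merged into one kernel-verified Lean document; each statement's English description precedes it below -/
import Mathlib

section
/- With notation as in the geodesic flow (u,v) for Christoffel symbols Γ on U' ⊆ ℝⁿ: for x ∈ U' and t ∈ J(x,0), the second derivatives of u and v with respect to the initial data at (x,0) in directions (ξ₁,η₁), (ξ₂,η₂) are u''(t,x,0)·((ξ₁,η₁),(ξ₂,η₂)) = −(t²/2)·(Γ(x)(η₁,η₂) + Γ(x)(η₂,η₁)) and v''(t,x,0)·((ξ₁,η₁),(ξ₂,η₂)) = −t·(Γ(x)(η₁,η₂) + Γ(x)(η₂,η₁)). -/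
noncomputable section

/-!
Geodesics are homogeneous: `u(t, x, s η) = u(s t, x, η)` and `v(t, x, s η) = s v(s t, x, η)`.
Restricting the time-`t` flow to the line `s ↦ (x + s ξ, s η)` through `(x, 0)` therefore only
involves the flow near `(0, x, η)`, where its derivatives are read off from the initial condition
and the geodesic equation. This gives the second derivatives on the diagonal, and polarization
gives them everywhere. The same homogeneity, with local existence, shows that the domain of the flow
is a neighbourhood of every `(t, x, 0)`.
-/

open Filter Topology Metric

section SecondDerivative

variable {𝕜 E F G : Type*} [NontriviallyNormedField 𝕜]
  [NormedAddCommGroup E] [NormedSpace 𝕜 E] [NormedAddCommGroup F] [NormedSpace 𝕜 F]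
  [NormedAddCommGroup G] [NormedSpace 𝕜 G]

lemma differentiableAt_fderiv_of_contDiffAt_two {f : E → G} {p : E} (hf : ContDiffAt 𝕜 2 f p) :
    DifferentiableAt 𝕜 (fderiv 𝕜 f) p :=
  (hf.fderiv_right (m := 1) one_add_one_eq_two.le).differentiableAt one_ne_zero

lemma eventually_differentiableAt_of_contDiffAt_one {f : E → G} {p : E}
    (hf : ContDiffAt 𝕜 1 f p) : ∀ᶠ q in 𝓝 p, DifferentiableAt 𝕜 f q :=
  (hf.eventually (by simp)).mono fun _ hq ↦ hq.differentiableAt one_ne_zero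

lemma hasDerivAt_add_smul (p z : E) (s : 𝕜) : HasDerivAt (fun s : 𝕜 ↦ p + s • z) z s := by
  simpa using ((hasDerivAt_id s).smul_const z).const_add p

lemma tendsto_add_smul_nhds_zero (p z : E) : Tendsto (fun s : 𝕜 ↦ p + s • z) (𝓝 0) (𝓝 p) := by
  simpa using (hasDerivAt_add_smul p z (0 : 𝕜)).continuousAt.tendsto

lemma deriv_deriv_comp_add_smul {f : E → G} {p : E} (hf : ContDiffAt 𝕜 2 f p) (z : E) :
    deriv (deriv fun s : 𝕜 ↦ f (p + s • z)) 0 = fderiv 𝕜 (fderiv 𝕜 f) p z z := by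
  have hderiv : deriv (fun s : 𝕜 ↦ f (p + s • z)) =ᶠ[𝓝 0] fun s ↦ fderiv 𝕜 f (p + s • z) z := by
    filter_upwards [(tendsto_add_smul_nhds_zero p z).eventually
      (eventually_differentiableAt_of_contDiffAt_one (hf.of_le one_le_two))] with s hs
    exact (hs.hasFDerivAt.comp_hasDerivAt s (hasDerivAt_add_smul p z s)).deriv
  have hline : HasDerivAt (fun s : 𝕜 ↦ fderiv 𝕜 f (p + s • z)) (fderiv 𝕜 (fderiv 𝕜 f) p z) 0 :=
    (differentiableAt_fderiv_of_contDiffAt_two hf).hasFDerivAt.hasLineDerivAt z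
  rw [hderiv.deriv_eq]
  simpa using (hline.clm_apply (hasDerivAt_const (0 : 𝕜) z)).deriv

lemma deriv_deriv_id_smul {g : 𝕜 → G} (hg : ContDiffAt 𝕜 2 g 0) :
    deriv (deriv fun s ↦ s • g s) 0 = (2 : 𝕜) • deriv g 0 := by
  have hderiv : deriv (fun s ↦ s • g s) =ᶠ[𝓝 0] fun s ↦ s • deriv g s + g s := by
    filter_upwards [eventually_differentiableAt_of_contDiffAt_one (hg.of_le one_le_two)]
      with s hs
    simpa using ((hasDerivAt_id s).fun_smul hs.hasDerivAt).deriv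
  have hg' : DifferentiableAt 𝕜 (deriv g) 0 :=
    (differentiableAt_fderiv_of_contDiffAt_two hg).clm_apply (differentiableAt_const 1)
  rw [hderiv.deriv_eq]
  simpa [two_smul] using (((hasDerivAt_id (0 : 𝕜)).fun_smul hg'.hasDerivAt).fun_add
    (hg.differentiableAt two_ne_zero).hasDerivAt).deriv

lemma fderiv_prodMk_apply {f : 𝕜 × F → G} {t : 𝕜} {q : F} (hf : DifferentiableAt 𝕜 f (t, q))
    (r : 𝕜) (a : F) :
    fderiv 𝕜 f (t, q) (r, a) =
      r • deriv (fun τ ↦ f (τ, q)) t + fderiv 𝕜 (fun q' ↦ f (t, q')) q a := by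
  have htime : HasDerivAt (fun τ ↦ f (τ, q)) (fderiv 𝕜 f (t, q) (1, 0)) t :=
    hf.hasFDerivAt.comp_hasDerivAt t ((hasDerivAt_id t).prodMk (hasDerivAt_const t q))
  have hspace : HasFDerivAt (fun q' ↦ f (t, q')) ((fderiv 𝕜 f (t, q)).comp (.inr 𝕜 𝕜 F)) q :=
    hf.hasFDerivAt.comp q (hasFDerivAt_prodMk_right t q)
  have hsplit : (r, a) = r • ((1 : 𝕜), (0 : F)) + (0, a) := by simp
  rw [htime.deriv, hspace.fderiv, hsplit, map_add, map_smul]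
  simp

end SecondDerivative

lemma fderiv_fderiv_apply_of_diag {E G : Type*} [NormedAddCommGroup E] [NormedSpace ℝ E]
    [NormedAddCommGroup G] [NormedSpace ℝ G] {f : E → G} {p : E} (hf : ContDiffAt ℝ 2 f p)
    (Q : E →L[ℝ] E →L[ℝ] G) (hQ : ∀ z, fderiv ℝ (fderiv ℝ f) p z z = Q z z) (a b : E) :
    fderiv ℝ (fderiv ℝ f) p a b = (1 / 2 : ℝ) • (Q a b + Q b a) := by
  have hsymm := hf.isSymmSndFDerivAt (by simp) b a
  have hadd := hQ (a + b)
  simp only [map_add, add_apply, hQ, hsymm] at hadd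
  linear_combination (norm := module) (1 / 2 : ℝ) • hadd

lemma exists_eventually_forall_ball_hasDerivAt_mem {E : Type*} [NormedAddCommGroup E]
    [NormedSpace ℝ E] [CompleteSpace E] {f : E → E} {p : E} (hf : ContDiffAt ℝ 1 f p) {W : Set E}
    (hW : W ∈ 𝓝 p) (t₀ : ℝ) :
    ∃ ε > 0, ∀ᶠ q in 𝓝 p, ∃ α : ℝ → E, α t₀ = q ∧
      ∀ t ∈ ball t₀ ε, α t ∈ W ∧ HasDerivAt α (f (α t)) t := by
  obtain ⟨δ, hδ, a, r, L, K, hr, hPL⟩ := IsPicardLindelof.of_contDiffAt_one hf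
  obtain ⟨α, hα, hcont⟩ :=
    (hPL t₀).exists_forall_mem_closedBall_eq_hasDerivWithinAt_continuousOn
  have hball : closedBall p r ∈ 𝓝 p := closedBall_mem_nhds p hr
  have htime : Set.Icc (t₀ - δ) (t₀ + δ) ∈ 𝓝 t₀ := Icc_mem_nhds (by linarith) (by linarith)
  have hstay : ∀ᶠ z in 𝓝 p ×ˢ 𝓝 t₀, α z ∈ W := by
    rw [← nhds_prod_eq]
    refine hcont.continuousAt (prod_mem_nhds hball htime) ?_
    rwa [(hα p (mem_of_mem_nhds hball)).1]
  obtain ⟨P, hP, T, hT, hPT⟩ := eventually_prod_iff.1 hstay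
  obtain ⟨ε, hε, hεT⟩ := nhds_basis_ball.eventually_iff.1
    (hT.and (eventually_mem_nhds_iff.2 htime))
  refine ⟨ε, hε, ?_⟩
  filter_upwards [hP, hball] with q hqP hq
  refine ⟨fun t ↦ α (q, t), (hα q hq).1, fun t ht ↦ ⟨hPT hqP (hεT ht).1, ?_⟩⟩
  exact ((hα q hq).2 t (mem_of_mem_nhds (hεT ht).2)).hasDerivAt (hεT ht).2

section GeodesicFlow

variable {E : Type*} [NormedAddCommGroup E] [NormedSpace ℝ E]
  {Γ : E → E →L[ℝ] E →L[ℝ] E} {U : Set E}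

/-- The pair `(γ, γ')` solves the geodesic system `γ̇ = γ'`, `γ̇' = -Γ(γ)(γ', γ')` at all times in
`I`, with `γ` staying in `U`. -/
def IsGeodesicOn (Γ : E → E →L[ℝ] E →L[ℝ] E) (U : Set E) (γ γ' : ℝ → E) (I : Set ℝ) : Prop :=
  ∀ t ∈ I, γ t ∈ U ∧ HasDerivAt γ (γ' t) t ∧ HasDerivAt γ' (-(Γ (γ t) (γ' t) (γ' t))) t

/-- The vector field on phase space `E × E` whose integral curves are the geodesics of `Γ`
together with their velocities. -/
def geodesicSpray (Γ : E → E →L[ℝ] E →L[ℝ] E) (q : E × E) : E × E :=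
  (q.2, -(Γ q.1 q.2 q.2))

/-- `(u, v)` is the maximal geodesic flow of `Γ` on `U`: `t ↦ (u t x w, v t x w)` is the solution
of the geodesic system with initial data `(x, w)`, and the open interval `J x w` is its maximal
interval of existence. Values outside the domain are unconstrained. -/
structure IsMaximalGeodesicFlow (Γ : E → E →L[ℝ] E →L[ℝ] E) (U : Set E) (J : E → E → Set ℝ)
    (u v : ℝ → E → E → E) : Prop where
  interval : ∀ x ∈ U, ∀ w, 0 ∈ J x w ∧ IsOpen (J x w) ∧ (J x w).OrdConnected
  initial : ∀ x ∈ U, ∀ w, u 0 x w = x ∧ v 0 x w = w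
  isGeodesicOn : ∀ x ∈ U, ∀ w, IsGeodesicOn Γ U (fun t ↦ u t x w) (fun t ↦ v t x w) (J x w)
  maximal : ∀ x ∈ U, ∀ w, ∀ (I : Set ℝ) (γ γ' : ℝ → E), IsOpen I → I.OrdConnected → 0 ∈ I →
    γ 0 = x → γ' 0 = w → IsGeodesicOn Γ U γ γ' I →
    I ⊆ J x w ∧ ∀ t ∈ I, γ t = u t x w ∧ γ' t = v t x w

/-- The set of `(t, x, w)` at which a geodesic flow with intervals of existence `J` is defined. -/
def geodesicFlowDomain (U : Set E) (J : E → E → Set ℝ) : Set (ℝ × E × E) :=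
  {p | p.2.1 ∈ U ∧ p.1 ∈ J p.2.1 p.2.2}

lemma eventually_mem_geodesicFlowDomain_line {J : E → E → Set ℝ} {x w : E}
    (hD : geodesicFlowDomain U J ∈ 𝓝 (0, x, w)) (t : ℝ) (ξ : E) :
    ∀ᶠ s : ℝ in 𝓝 0, (s * t, x + s • ξ, w) ∈ geodesicFlowDomain U J := by
  filter_upwards [tendsto_add_smul_nhds_zero (0, x, w) (t, ξ, 0) hD] with s hs
  simpa using! hs

lemma IsGeodesicOn.comp_mul_left {γ γ' : ℝ → E} {I : Set ℝ} (h : IsGeodesicOn Γ U γ γ' I)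
    (c : ℝ) :
    IsGeodesicOn Γ U (fun t ↦ γ (c * t)) (fun t ↦ c • γ' (c * t)) ((c * ·) ⁻¹' I) := by
  intro t ht
  obtain ⟨hmem, hγ, hγ'⟩ := h (c * t) ht
  have hmul : HasDerivAt (c * ·) c t := by simpa using (hasDerivAt_id t).const_mul c
  refine ⟨hmem, hγ.scomp t hmul, ((hγ'.scomp t hmul).const_smul c).congr_deriv ?_⟩
  simp only [map_smul, smul_apply, smul_neg]

lemma isGeodesicOn_of_hasDerivAt_geodesicSpray {α : ℝ → E × E} {I : Set ℝ}
    (hα : ∀ t ∈ I, (α t).1 ∈ U ∧ HasDerivAt α (geodesicSpray Γ (α t)) t) :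
    IsGeodesicOn Γ U (fun t ↦ (α t).1) (fun t ↦ (α t).2) I := fun t ht ↦
  ⟨(hα t ht).1, (hasFDerivAt_fst (p := α t)).comp_hasDerivAt t (hα t ht).2,
    (hasFDerivAt_snd (p := α t)).comp_hasDerivAt t (hα t ht).2⟩

lemma contDiffAt_geodesicSpray {k : WithTop ℕ∞} {q : E × E} (hΓ : ContDiffAt ℝ k Γ q.1) :
    ContDiffAt ℝ k (geodesicSpray Γ) q :=
  contDiffAt_snd.prodMk (((hΓ.comp q contDiffAt_fst).clm_apply contDiffAt_snd).clm_apply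
    contDiffAt_snd).neg

namespace IsMaximalGeodesicFlow

variable {J : E → E → Set ℝ} {u v : ℝ → E → E → E}

lemma smul_velocity (h : IsMaximalGeodesicFlow Γ U J u v) {c t : ℝ} {x w : E}
    (hp : (c * t, x, w) ∈ geodesicFlowDomain U J) :
    t ∈ J x (c • w) ∧ u t x (c • w) = u (c * t) x w ∧ v t x (c • w) = c • v (c * t) x w := by
  obtain ⟨hx, ht⟩ := hp
  obtain ⟨hzero, hopen, hconn⟩ := h.interval x hx w
  obtain ⟨hu₀, hv₀⟩ := h.initial x hx w
  obtain ⟨hsub, heq⟩ := h.maximal x hx (c • w) _ _ _ (hopen.preimage (by fun_prop))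
    (hconn.convex.linear_preimage (LinearMap.mulLeft ℝ c)).ordConnected (by simpa using hzero)
    (by simpa using hu₀) (by simp [hv₀]) ((h.isGeodesicOn x hx w).comp_mul_left c)
  exact ⟨hsub ht, (heq t ht).1.symm, (heq t ht).2.symm⟩

lemma domain_mem_nhds_zero_time [CompleteSpace E] (h : IsMaximalGeodesicFlow Γ U J u v)
    {x : E} (hU : U ∈ 𝓝 x) (hΓ : ContDiffAt ℝ 1 Γ x) (w : E) :
    geodesicFlowDomain U J ∈ 𝓝 (0, x, w) := by
  have hmem : ∀ᶠ q : E × E in 𝓝 (x, w), q.1 ∈ U := continuousAt_fst hU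
  obtain ⟨ε, hε, hflow⟩ := exists_eventually_forall_ball_hasDerivAt_mem
    (contDiffAt_geodesicSpray (q := (x, w)) hΓ) hmem 0
  filter_upwards [prod_mem_nhds (ball_mem_nhds 0 hε) (hflow.and hmem)]
  rintro ⟨t, y, w'⟩ ⟨ht, ⟨α, hα₀, hα⟩, hy⟩
  have hmax := h.maximal y hy w' (ball 0 ε) (fun t ↦ (α t).1) (fun t ↦ (α t).2) isOpen_ball
    (convex_ball 0 ε).ordConnected (mem_ball_self hε) (by simp [hα₀]) (by simp [hα₀])
    (isGeodesicOn_of_hasDerivAt_geodesicSpray hα)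
  exact ⟨hy, hmax.1 ht⟩

lemma domain_mem_nhds_zero_velocity [CompleteSpace E] (h : IsMaximalGeodesicFlow Γ U J u v)
    {x : E} (hU : U ∈ 𝓝 x) (hΓ : ContDiffAt ℝ 1 Γ x) (t : ℝ) :
    geodesicFlowDomain U J ∈ 𝓝 (t, x, 0) := by
  have hcont : Tendsto (fun c : ℝ ↦ (c * t, x, (0 : E))) (𝓝[≠] 0) (𝓝 (0, x, 0)) := by
    refine (Continuous.tendsto' ?_ 0 _ (by simp)).mono_left nhdsWithin_le_nhds
    fun_prop
  obtain ⟨c, hc, hc₀⟩ := ((hcont.eventually (eventually_mem_nhds_iff.2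
    (h.domain_mem_nhds_zero_time hU hΓ 0))).and eventually_mem_nhdsWithin).exists
  have hscale : Tendsto (fun p : ℝ × E × E ↦ (c * p.1, p.2.1, c⁻¹ • p.2.2)) (𝓝 (t, x, 0))
      (𝓝 (c * t, x, 0)) := by
    refine Continuous.tendsto' ?_ _ _ (by simp)
    fun_prop
  filter_upwards [hscale hc] with p hp
  refine ⟨hp.1, ?_⟩
  simpa [smul_inv_smul₀ hc₀] using (h.smul_velocity hp).1

lemma fderiv_velocity_zero_time (h : IsMaximalGeodesicFlow Γ U J u v) {x : E} (hU : U ∈ 𝓝 x)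
    {w : E} (hv : DifferentiableAt ℝ ↿v (0, x, w)) (r : ℝ) (ξ η : E) :
    fderiv ℝ ↿v (0, x, w) (r, ξ, η) = η - r • Γ x w w := by
  have hx := mem_of_mem_nhds hU
  have htime : deriv (fun t ↦ v t x w) 0 = -(Γ x w w) := by
    simpa only [h.initial x hx w] using
      (h.isGeodesicOn x hx w 0 (h.interval x hx w).1).2.2.deriv
  have hspace : (fun q : E × E ↦ v 0 q.1 q.2) =ᶠ[𝓝 (x, w)] Prod.snd := by
    filter_upwards [(continuousAt_fst (p := (x, w))).eventually_mem hU] with q hq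
    exact (h.initial _ hq _).2
  calc fderiv ℝ ↿v (0, x, w) (r, ξ, η)
    _ = r • deriv (fun t ↦ v t x w) 0 + fderiv ℝ (fun q : E × E ↦ v 0 q.1 q.2) (x, w) (ξ, η) :=
      fderiv_prodMk_apply hv r (ξ, η)
    _ = η - r • Γ x w w := by
      rw [htime, hspace.fderiv_eq, fderiv_snd, ContinuousLinearMap.coe_snd', smul_neg,
        neg_add_eq_sub]

lemma fderiv_position_apply_time (h : IsMaximalGeodesicFlow Γ U J u v) {p : ℝ × E × E}
    (hp : p ∈ geodesicFlowDomain U J) (hu : DifferentiableAt ℝ ↿u p) :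
    fderiv ℝ ↿u p (1, 0) = ↿v p := by
  have htime : deriv (fun t ↦ u t p.2.1 p.2.2) p.1 = ↿v p :=
    (h.isGeodesicOn _ hp.1 _ _ hp.2).2.1.deriv
  rw [← htime]
  simpa using! fderiv_prodMk_apply hu 1 0

lemma fderiv_fderiv_position_apply_time (h : IsMaximalGeodesicFlow Γ U J u v) {p : ℝ × E × E}
    (hp : geodesicFlowDomain U J ∈ 𝓝 p) (hu : ContDiffAt ℝ 2 ↿u p) (z : ℝ × E × E) :
    fderiv ℝ (fderiv ℝ ↿u) p z (1, 0) = fderiv ℝ ↿v p z := by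
  have htime : (fun p ↦ fderiv ℝ ↿u p (1, 0)) =ᶠ[𝓝 p] ↿v := by
    filter_upwards [eventually_differentiableAt_of_contDiffAt_one (hu.of_le one_le_two), hp]
      with q hdiff hq using h.fderiv_position_apply_time hq hdiff
  rw [← htime.fderiv_eq, fderiv_clm_apply (differentiableAt_fderiv_of_contDiffAt_two hu)
    (differentiableAt_const _)]
  simp

lemma fderiv_fderiv_position_apply_initial_point (h : IsMaximalGeodesicFlow Γ U J u v) {x : E}
    (hU : U ∈ 𝓝 x) {w : E} (hu : ContDiffAt ℝ 2 ↿u (0, x, w)) (ξ : E) :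
    fderiv ℝ (fderiv ℝ ↿u) (0, x, w) (0, ξ, 0) (0, ξ, 0) = 0 := by
  have hline : (fun s : ℝ ↦ ↿u ((0, x, w) + s • (0, ξ, 0))) =ᶠ[𝓝 0] fun s ↦ x + s • ξ := by
    filter_upwards [tendsto_add_smul_nhds_zero x ξ hU] with s hs
    simpa using! (h.initial _ hs w).1
  have hderiv : deriv (fun s : ℝ ↦ x + s • ξ) = fun _ ↦ ξ :=
    funext fun s ↦ (hasDerivAt_add_smul x ξ s).deriv
  rw [← deriv_deriv_comp_add_smul hu, hline.deriv.deriv_eq, hderiv, deriv_const]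

lemma fderiv_fderiv_position_zero_time (h : IsMaximalGeodesicFlow Γ U J u v) {x : E}
    (hU : U ∈ 𝓝 x) {w : E} (hD : geodesicFlowDomain U J ∈ 𝓝 (0, x, w))
    (hu : ContDiffAt ℝ 2 ↿u (0, x, w)) (hv : DifferentiableAt ℝ ↿v (0, x, w)) (r : ℝ) (ξ : E) :
    fderiv ℝ (fderiv ℝ ↿u) (0, x, w) (r, ξ, 0) (r, ξ, 0) = -(r ^ 2 • Γ x w w) := by
  have hsplit : (r, ξ, (0 : E)) = r • ((1 : ℝ), (0 : E × E)) + (0, ξ, 0) := by simp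
  have hmixed : fderiv ℝ (fderiv ℝ ↿u) (0, x, w) (1, 0) (0, ξ, 0) =
      fderiv ℝ ↿v (0, x, w) (0, ξ, 0) := by
    rw [hu.isSymmSndFDerivAt (by simp), h.fderiv_fderiv_position_apply_time hD hu]
  rw [hsplit]
  simp only [map_add, map_smul, add_apply, smul_apply, hmixed,
    h.fderiv_fderiv_position_apply_time hD hu, h.fderiv_fderiv_position_apply_initial_point hU hu]
  rw [← Prod.mk_zero_zero, h.fderiv_velocity_zero_time hU hv, h.fderiv_velocity_zero_time hU hv]
  module

lemma fderiv_fderiv_position_diag (h : IsMaximalGeodesicFlow Γ U J u v) {x : E} (hU : U ∈ 𝓝 x)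
    {t : ℝ} (hut : ContDiffAt ℝ 2 ↿(u t) (x, 0)) {η : E}
    (hD : geodesicFlowDomain U J ∈ 𝓝 (0, x, η)) (hu : ContDiffAt ℝ 2 ↿u (0, x, η))
    (hv : DifferentiableAt ℝ ↿v (0, x, η)) (ξ : E) :
    fderiv ℝ (fderiv ℝ ↿(u t)) (x, 0) (ξ, η) (ξ, η) = -(t ^ 2 • Γ x η η) := by
  have hline : (fun s : ℝ ↦ ↿(u t) ((x, 0) + s • (ξ, η))) =ᶠ[𝓝 0]
      fun s ↦ ↿u ((0, x, η) + s • (t, ξ, 0)) := by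
    filter_upwards [eventually_mem_geodesicFlowDomain_line hD t ξ] with s hs
    simpa using! (h.smul_velocity hs).2.1
  rw [← deriv_deriv_comp_add_smul hut, hline.deriv.deriv_eq, deriv_deriv_comp_add_smul hu,
    h.fderiv_fderiv_position_zero_time hU hD hu hv]

lemma fderiv_fderiv_velocity_diag (h : IsMaximalGeodesicFlow Γ U J u v) {x : E} (hU : U ∈ 𝓝 x)
    {t : ℝ} (hvt : ContDiffAt ℝ 2 ↿(v t) (x, 0)) {η : E}
    (hD : geodesicFlowDomain U J ∈ 𝓝 (0, x, η)) (hv : ContDiffAt ℝ 2 ↿v (0, x, η)) (ξ : E) :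
    fderiv ℝ (fderiv ℝ ↿(v t)) (x, 0) (ξ, η) (ξ, η) = -((2 * t) • Γ x η η) := by
  have hline : (fun s : ℝ ↦ ↿(v t) ((x, 0) + s • (ξ, η))) =ᶠ[𝓝 0]
      fun s ↦ s • ↿v ((0, x, η) + s • (t, ξ, 0)) := by
    filter_upwards [eventually_mem_geodesicFlowDomain_line hD t ξ] with s hs
    simpa using! (h.smul_velocity hs).2.2
  have hsmooth : ContDiffAt ℝ 2 (fun s : ℝ ↦ ↿v ((0, x, η) + s • (t, ξ, 0))) 0 := by
    refine ContDiffAt.comp (g := ↿v) 0 (by simpa using hv) ?_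
    fun_prop
  have hdiff : DifferentiableAt ℝ ↿v (0, x, η) := hv.differentiableAt two_ne_zero
  have hderiv : deriv (fun s : ℝ ↦ ↿v ((0, x, η) + s • (t, ξ, 0))) 0 = -(t • Γ x η η) := by
    rw [(hdiff.hasFDerivAt.hasLineDerivAt (t, ξ, 0)).deriv, h.fderiv_velocity_zero_time hU hdiff,
      zero_sub]
  rw [← deriv_deriv_comp_add_smul hvt, hline.deriv.deriv_eq, deriv_deriv_id_smul hsmooth, hderiv,
    smul_neg, mul_smul]

end IsMaximalGeodesicFlow

theorem geodesic_flow_second_derivatives_general [CompleteSpace E] {J : E → E → Set ℝ}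
    {u v : ℝ → E → E → E} (h : IsMaximalGeodesicFlow Γ U J u v) (hU : IsOpen U)
    (hΓ : ContDiffOn ℝ 1 Γ U) (hu : ContDiffOn ℝ 2 ↿u (geodesicFlowDomain U J))
    (hv : ContDiffOn ℝ 2 ↿v (geodesicFlowDomain U J)) {x : E} (hx : x ∈ U) (t : ℝ)
    (ξ₁ η₁ ξ₂ η₂ : E) :
    fderiv ℝ (fderiv ℝ ↿(u t)) (x, 0) (ξ₁, η₁) (ξ₂, η₂) =
        -((t ^ 2 / 2) • (Γ x η₁ η₂ + Γ x η₂ η₁)) ∧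
      fderiv ℝ (fderiv ℝ ↿(v t)) (x, 0) (ξ₁, η₁) (ξ₂, η₂) =
        -(t • (Γ x η₁ η₂ + Γ x η₂ η₁)) := by
  have hUx : U ∈ 𝓝 x := hU.mem_nhds hx
  have hΓx : ContDiffAt ℝ 1 Γ x := hΓ.contDiffAt hUx
  have hD₀ (w : E) := h.domain_mem_nhds_zero_time hUx hΓx w
  have hD := h.domain_mem_nhds_zero_velocity hUx hΓx t
  have hslice : ContDiffAt ℝ 2 (fun q : E × E ↦ (t, q)) (x, 0) := by fun_prop
  have hut : ContDiffAt ℝ 2 ↿(u t) (x, 0) := (hu.contDiffAt hD).comp (x, 0) hslice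
  have hvt : ContDiffAt ℝ 2 ↿(v t) (x, 0) := (hv.contDiffAt hD).comp (x, 0) hslice
  let Q := (Γ x).bilinearComp (.snd ℝ E E) (.snd ℝ E E)
  constructor
  · rw [fderiv_fderiv_apply_of_diag hut (-(t ^ 2 • Q)) fun z ↦
      h.fderiv_fderiv_position_diag hUx hut (hD₀ z.2) (hu.contDiffAt (hD₀ z.2))
        ((hv.contDiffAt (hD₀ z.2)).differentiableAt two_ne_zero) z.1]
    simp only [Q, neg_apply, smul_apply, ContinuousLinearMap.bilinearComp_apply,
      ContinuousLinearMap.coe_snd']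
    module
  · rw [fderiv_fderiv_apply_of_diag hvt (-((2 * t) • Q)) fun z ↦
      h.fderiv_fderiv_velocity_diag hUx hvt (hD₀ z.2) (hv.contDiffAt (hD₀ z.2)) z.1]
    simp only [Q, neg_apply, smul_apply, ContinuousLinearMap.bilinearComp_apply,
      ContinuousLinearMap.coe_snd']
    module

end GeodesicFlow

/-- For the geodesic flow `(u,v)` of smooth Christoffel symbols `Γ` on an open
`U' ⊆ ℝⁿ`: for `x ∈ U'` and `t ∈ J(x,0)`, the second derivatives with respect to the initial
data at `(x,0)` in directions `(ξ₁,η₁)`, `(ξ₂,η₂)` are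
`u''(t,x,0) = −(t²/2)·(Γ(x)(η₁,η₂) + Γ(x)(η₂,η₁))` and
`v''(t,x,0) = −t·(Γ(x)(η₁,η₂) + Γ(x)(η₂,η₁))`. -/
theorem geodesic_flow_second_derivatives
    {n : ℕ} (U' : Set (EuclideanSpace ℝ (Fin n))) (hU' : IsOpen U')
    (Γ : EuclideanSpace ℝ (Fin n) →
      EuclideanSpace ℝ (Fin n) →L[ℝ] EuclideanSpace ℝ (Fin n) →L[ℝ] EuclideanSpace ℝ (Fin n))
    (hΓ : ContDiffOn ℝ (⊤ : ℕ∞) Γ U')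
    (J : EuclideanSpace ℝ (Fin n) → EuclideanSpace ℝ (Fin n) → Set ℝ)
    (u v : ℝ → EuclideanSpace ℝ (Fin n) → EuclideanSpace ℝ (Fin n) → EuclideanSpace ℝ (Fin n))
    (hJ : ∀ x ∈ U', ∀ w : EuclideanSpace ℝ (Fin n),
      0 ∈ J x w ∧ IsOpen (J x w) ∧ (J x w).OrdConnected)
    (hinit : ∀ x ∈ U', ∀ w : EuclideanSpace ℝ (Fin n), u 0 x w = x ∧ v 0 x w = w)
    (hsol : ∀ x ∈ U', ∀ w : EuclideanSpace ℝ (Fin n), ∀ t ∈ J x w,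
      u t x w ∈ U' ∧ HasDerivAt (fun τ => u τ x w) (v t x w) t ∧
      HasDerivAt (fun τ => v τ x w) (-(Γ (u t x w) (v t x w) (v t x w))) t)
    (hmax : ∀ x ∈ U', ∀ w : EuclideanSpace ℝ (Fin n), ∀ (I : Set ℝ)
      (u₁ v₁ : ℝ → EuclideanSpace ℝ (Fin n)),
      IsOpen I → I.OrdConnected → 0 ∈ I → u₁ 0 = x → v₁ 0 = w →
      (∀ t ∈ I, u₁ t ∈ U' ∧ HasDerivAt u₁ (v₁ t) t ∧
        HasDerivAt v₁ (-(Γ (u₁ t) (v₁ t) (v₁ t))) t) →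
      I ⊆ J x w ∧ ∀ t ∈ I, u₁ t = u t x w ∧ v₁ t = v t x w)
    -- `(u,v)` is smooth on its (open) domain of definition
    (hsmooth : ContDiffOn ℝ (⊤ : ℕ∞)
      (fun p : ℝ × EuclideanSpace ℝ (Fin n) × EuclideanSpace ℝ (Fin n) =>
        (u p.1 p.2.1 p.2.2, v p.1 p.2.1 p.2.2))
      {p : ℝ × EuclideanSpace ℝ (Fin n) × EuclideanSpace ℝ (Fin n) |
        p.2.1 ∈ U' ∧ p.1 ∈ J p.2.1 p.2.2}) :
    ∀ x ∈ U', ∀ t ∈ J x 0, ∀ ξ₁ η₁ ξ₂ η₂ : EuclideanSpace ℝ (Fin n),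
      fderiv ℝ (fun q : EuclideanSpace ℝ (Fin n) × EuclideanSpace ℝ (Fin n) =>
          fderiv ℝ (fun q' : EuclideanSpace ℝ (Fin n) × EuclideanSpace ℝ (Fin n) =>
            u t q'.1 q'.2) q) (x, 0) (ξ₁, η₁) (ξ₂, η₂)
        = -((t ^ 2 / 2) • (Γ x η₁ η₂ + Γ x η₂ η₁)) ∧
      fderiv ℝ (fun q : EuclideanSpace ℝ (Fin n) × EuclideanSpace ℝ (Fin n) =>
          fderiv ℝ (fun q' : EuclideanSpace ℝ (Fin n) × EuclideanSpace ℝ (Fin n) =>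
            v t q'.1 q'.2) q) (x, 0) (ξ₁, η₁) (ξ₂, η₂)
        = -(t • (Γ x η₁ η₂ + Γ x η₂ η₁)) := by
  have hsmooth₂ := hsmooth.of_le (m := 2) (WithTop.coe_le_coe.2 le_top)
  exact fun x hx t _ ↦ geodesic_flow_second_derivatives_general ⟨hJ, hinit, hsol, hmax⟩ hU'
    (hΓ.of_le (WithTop.coe_le_coe.2 le_top)) hsmooth₂.fst hsmooth₂.snd hx t
end
end

section
/- Let Ω ⊆ ℝⁿ be open, f ∈ C^∞(Ω × Ω), and suppose that for every compactly supported distribution T ∈ E'(Ω) the generalized function (φ, x) ↦ ⟨T, f(x,·)·φ(·−x)⟩ is negligible in the diffeomorphism-invariant Colombeau algebra G^d(Ω). Then all first-order partial derivatives of f in the second slot vanish on the diagonal: ∂_i(y ↦ f(x,y))|_{y=x} = 0 for all x ∈ Ω and i = 1,…,n. -/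
open MeasureTheory

noncomputable section

/-!
If `T` extends the directional derivative `g ↦ ∂ᵥg(x)` and the mollifier `φ` equals `1` near the
origin, then `⟨T, f(x,·)(S_ε φ)(·−x)⟩` is exactly `ε⁻ᵈ ∂ᵥf(x,·)(x)`, with `d` the dimension.  Even
mere boundedness as `ε → 0` then forces the derivative to vanish.

A mollifier which equals `1` near the origin and has vanishing moments up to order `q` is a linear
combination of dilations of one bump function: dilation by `l` multiplies the moments of order `p`
by `l^(d+p)` and fixes the value at `0`, so the coefficients need only solve a Vandermonde system.
-/

open Filter Function Module
open scoped ContDiff Topology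

section Dilations

variable {E : Type*} [NormedAddCommGroup E] [NormedSpace ℝ E]

/-- Positive homogeneity of degree `d`.  Moments are taken against continuous functions of this
kind, of which the monomials of degree `d` are the classical examples; this makes the notion of a
vanishing moment coordinate free. -/
def IsPosHomogeneous (d : ℕ) (P : E → ℝ) : Prop :=
  ∀ l : ℝ, 0 < l → ∀ x, P (l • x) = l ^ d * P x

/-- The combination of dilations `x ↦ ∑ⱼ cⱼ η(x / lⱼ)`, from which mollifiers with vanishing
moments are built. -/
def dilationSum {ι : Type*} [Fintype ι] (c l : ι → ℝ) (η : E → ℝ) : E → ℝ :=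
  ∑ j, c j • fun x => η ((l j)⁻¹ • x)

variable {ι : Type*} [Fintype ι] (c : ι → ℝ) {l : ι → ℝ} {η : E → ℝ}

lemma dilationSum_apply (l : ι → ℝ) (η : E → ℝ) (x : E) :
    dilationSum c l η x = ∑ j, c j * η ((l j)⁻¹ • x) := by
  simp [dilationSum]

lemma contDiff_dilationSum {k : ℕ∞ω} (l : ι → ℝ) (hη : ContDiff ℝ k η) :
    ContDiff ℝ k (dilationSum c l η) := by
  rw [funext (dilationSum_apply c l η)]
  exact ContDiff.sum fun j _ => contDiff_const.mul (hη.comp (contDiff_const_smul _))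

lemma hasCompactSupport_dilationSum (hl : ∀ j, 0 < l j) (hη : HasCompactSupport η) :
    HasCompactSupport (dilationSum c l η) :=
  Finset.sum_induction _ HasCompactSupport (fun _ _ => .add) .zero fun j _ =>
    (hη.comp_smul (inv_ne_zero (hl j).ne')).smul_left (f := fun _ => c j)

lemma dilationSum_eventuallyEq_const (l : ι → ℝ) {a : ℝ} (hη : ∀ᶠ x in 𝓝 0, η x = a) :
    ∀ᶠ x in 𝓝 0, dilationSum c l η x = (∑ j, c j) * a := by
  have hdil (j : ι) : ∀ᶠ x in 𝓝 0, η ((l j)⁻¹ • x) = a :=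
    ((continuous_const_smul (l j)⁻¹).tendsto' 0 0 (smul_zero _)).eventually hη
  filter_upwards [eventually_all.2 hdil] with x hx
  simp only [dilationSum_apply, hx, Finset.sum_mul]

variable [FiniteDimensional ℝ E] [MeasurableSpace E] [BorelSpace E]
  (μ : Measure E) [μ.IsAddHaarMeasure]

lemma integral_posHomogeneous_mul_comp_inv_smul {d : ℕ} {P : E → ℝ} (hP : IsPosHomogeneous d P)
    (η : E → ℝ) {l : ℝ} (hl : 0 < l) :
    ∫ x, P x * η (l⁻¹ • x) ∂μ = l ^ (finrank ℝ E + d) * ∫ x, P x * η x ∂μ :=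
  calc
    ∫ x, P x * η (l⁻¹ • x) ∂μ = ∫ x, P (l • l⁻¹ • x) * η (l⁻¹ • x) ∂μ := by
      simp only [smul_inv_smul₀ hl.ne']
    _ = l ^ finrank ℝ E * ∫ x, P (l • x) * η x ∂μ :=
      Measure.integral_comp_inv_smul_of_nonneg μ (fun x => P (l • x) * η x) hl.le
    _ = l ^ (finrank ℝ E + d) * ∫ x, P x * η x ∂μ := by
      simp only [hP l hl, mul_assoc, integral_const_mul, pow_add]

lemma integral_posHomogeneous_mul_dilationSum {d : ℕ} {P : E → ℝ} (hP : IsPosHomogeneous d P)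
    (hP_cont : Continuous P) (hl : ∀ j, 0 < l j) (hη : Continuous η)
    (hη_supp : HasCompactSupport η) :
    ∫ x, P x * dilationSum c l η x ∂μ =
      (∑ j, c j * l j ^ (finrank ℝ E + d)) * ∫ x, P x * η x ∂μ := by
  have hint (j : ι) : Integrable (fun x => P x * η ((l j)⁻¹ • x)) μ :=
    (hP_cont.mul (hη.comp (continuous_const_smul _))).integrable_of_hasCompactSupport
      (hη_supp.comp_smul (inv_ne_zero (hl j).ne')).mul_left
  simp only [dilationSum_apply, Finset.mul_sum, mul_left_comm (P _)]
  rw [integral_finsetSum _ fun j _ => (hint j).const_mul (c j), Finset.sum_mul]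
  simp only [integral_const_mul, integral_posHomogeneous_mul_comp_inv_smul μ hP η (hl _),
    mul_assoc]

end Dilations

section Mollifiers

lemma exists_sum_mul_pow_eq {K : Type*} [Field K] {N : ℕ} {v : Fin N → K} (hv : Injective v)
    (b : Fin N → K) : ∃ c : Fin N → K, ∀ p : Fin N, ∑ j, c j * v j ^ (p : ℕ) = b p := by
  have hdet : IsUnit (Matrix.vandermonde v).det :=
    isUnit_iff_ne_zero.2 (Matrix.det_vandermonde_ne_zero_iff.2 hv)
  obtain ⟨c, hc⟩ :=
    Matrix.vecMul_surjective_iff_isUnit.2 ((Matrix.isUnit_iff_isUnit_det _).2 hdet) b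
  exact ⟨c, fun p => congrFun hc p⟩

variable {E : Type*} [NormedAddCommGroup E] [NormedSpace ℝ E] [MeasurableSpace E]

/-- The test functions with unit integral and vanishing moments of orders `1, …, q` (the set
`𝒜_q` of Colombeau theory). -/
structure IsMollifier (μ : Measure E) (q : ℕ) (φ : E → ℝ) : Prop where
  contDiff : ContDiff ℝ ∞ φ
  hasCompactSupport : HasCompactSupport φ
  integral_eq_one : ∫ x, φ x ∂μ = 1
  integral_posHomogeneous_mul : ∀ d, 1 ≤ d → d ≤ q → ∀ P : E → ℝ, Continuous P →
    IsPosHomogeneous d P → ∫ x, P x * φ x ∂μ = 0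

lemma exists_isMollifier_eventually_eq_one [FiniteDimensional ℝ E] [Nontrivial E] [BorelSpace E]
    (μ : Measure E) [μ.IsAddHaarMeasure] (q : ℕ) :
    ∃ φ : E → ℝ, IsMollifier μ q φ ∧ ∀ᶠ x in 𝓝 0, φ x = 1 := by
  let η : ContDiffBump (0 : E) := default
  set n := finrank ℝ E
  have hn : 0 < n := finrank_pos
  let l : Fin (n + q + 1) → ℝ := fun j => (j : ℝ) + 1
  have hl_pos (j) : 0 < l j := by positivity
  have hl_inj : Injective l := fun i j h =>
    Fin.ext (Nat.cast_injective (R := ℝ) (add_right_cancel h))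
  -- The powers `0`, `n`, `n + d` govern the value at `0`, the integral, the moments of order `d`.
  obtain ⟨c, hc⟩ := exists_sum_mul_pow_eq hl_inj
    fun p => if (p : ℕ) = 0 then 1 else if (p : ℕ) = n then (∫ x, η x ∂μ)⁻¹ else 0
  have hc_zero : ∑ j, c j = 1 := by simpa using hc 0
  have hc_dim : ∑ j, c j * l j ^ n = (∫ x, η x ∂μ)⁻¹ := by
    simpa [hn.ne'] using hc ⟨n, by lia⟩
  have hc_moment (d : ℕ) (hd : 1 ≤ d) (hdq : d ≤ q) : ∑ j, c j * l j ^ (n + d) = 0 := by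
    simpa [hn.ne', Nat.one_le_iff_ne_zero.1 hd] using hc ⟨n + d, by lia⟩
  have hmoment (d : ℕ) (P : E → ℝ) (hP : IsPosHomogeneous d P) (hP_cont : Continuous P) :=
    integral_posHomogeneous_mul_dilationSum c μ hP hP_cont hl_pos η.continuous
      η.hasCompactSupport
  refine ⟨dilationSum c l η, ⟨contDiff_dilationSum c l η.contDiff,
    hasCompactSupport_dilationSum c hl_pos η.hasCompactSupport, ?_, ?_⟩, ?_⟩
  · have hone := hmoment 0 (fun _ => 1) (fun l _ x => by simp) continuous_const
    simp only [one_mul, add_zero] at hone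
    rw [hone, hc_dim, inv_mul_cancel₀ η.integral_pos.ne']
  · intro d hd hdq P hP_cont hP
    rw [hmoment d P hP hP_cont, hc_moment d hd hdq, zero_mul]
  · simpa only [hc_zero, one_mul] using
      dilationSum_eventuallyEq_const c l (a := 1) η.eventuallyEq_one

lemma IsMollifier.integral_monomial_mul_eq_zero {ι : Type*} [Fintype ι] {q : ℕ}
    {μ : Measure (EuclideanSpace ℝ ι)} {φ : EuclideanSpace ℝ ι → ℝ} (hφ : IsMollifier μ q φ)
    (α : ι → ℕ) (hα : 1 ≤ ∑ i, α i) (hαq : ∑ i, α i ≤ q) :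
    ∫ x, (∏ i, x i ^ α i) * φ x ∂μ = 0 := by
  refine hφ.integral_posHomogeneous_mul _ hα hαq (fun x => ∏ i, x i ^ α i) (by fun_prop) ?_
  intro l _ x
  simp only [PiLp.smul_apply, smul_eq_mul, mul_pow, Finset.prod_mul_distrib,
    Finset.prod_pow_eq_pow_sum]

end Mollifiers

section Negligibility

variable {E : Type*} [NormedAddCommGroup E] [NormedSpace ℝ E]

/-- The compactly supported distributions on `Ω`, encoded as linear functionals on all functions
whose values on smooth functions are dominated by finitely many `C^k`-seminorms on a compact subset
of `Ω`. -/
def IsCompactlySupportedDistribution (Ω : Set E) (T : (E → ℝ) →ₗ[ℝ] ℝ) : Prop :=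
  ∃ K : Set E, IsCompact K ∧ K ⊆ Ω ∧ ∃ C : ℝ, 0 ≤ C ∧ ∃ k : ℕ, ∀ g : E → ℝ, ContDiff ℝ ∞ g →
    |T g| ≤ C * ∑ i ∈ Finset.range (k + 1), ⨆ x : K, ‖iteratedFDeriv ℝ i g (x : E)‖

/-- The rescaling `S_ε φ(y) = ε⁻ᵈ φ(y / ε)`, with `d` the dimension, which preserves integrals. -/
def rescale (ε : ℝ) (φ : E → ℝ) (y : E) : ℝ :=
  (ε ^ finrank ℝ E)⁻¹ * φ (ε⁻¹ • y)

/-- Negligibility of the generalized function `(φ, x) ↦ R φ x` on `Ω`: on compact sets,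
`R (S_ε φ) = O(ε^m)` for every `m`, provided sufficiently many moments of `φ` vanish. -/
def IsNegligible [MeasurableSpace E] (μ : Measure E) (Ω : Set E) (R : (E → ℝ) → E → ℝ) : Prop :=
  ∀ K : Set E, IsCompact K → K ⊆ Ω → ∀ m : ℕ, ∃ q : ℕ, ∀ φ : E → ℝ, IsMollifier μ q φ →
    ∃ C > (0 : ℝ), ∃ ε₀ > (0 : ℝ), ∀ ε ∈ Set.Ioc (0 : ℝ) ε₀, ∀ x ∈ K,
      |R (rescale ε φ) x| ≤ C * ε ^ m

lemma exists_linearMap_eq_fderiv_apply {𝕜 E F : Type*} [NontriviallyNormedField 𝕜]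
    [NormedAddCommGroup E] [NormedSpace 𝕜 E] [NormedAddCommGroup F] [NormedSpace 𝕜 F] (x v : E) :
    ∃ T : (E → F) →ₗ[𝕜] F, ∀ g, DifferentiableAt 𝕜 g x → T g = fderiv 𝕜 g x v := by
  let D : Submodule 𝕜 (E → F) :=
    { carrier := {g | DifferentiableAt 𝕜 g x}
      add_mem' := DifferentiableAt.add
      zero_mem' := differentiableAt_const 0
      smul_mem' := fun a _ hg => hg.const_smul a }
  let L : D →ₗ[𝕜] F :=
    { toFun := fun g => fderiv 𝕜 g x v
      map_add' := fun g h => by simp [fderiv_add g.2 h.2]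
      map_smul' := fun a g => by simp [fderiv_const_smul g.2 a] }
  obtain ⟨T, hT⟩ := L.exists_extend
  exact ⟨T, fun g hg => LinearMap.congr_fun hT ⟨g, hg⟩⟩

lemma isCompactlySupportedDistribution_of_eq_fderiv_apply {Ω : Set E} {T : (E → ℝ) →ₗ[ℝ] ℝ}
    {x v : E} (hx : x ∈ Ω) (hT : ∀ g, DifferentiableAt ℝ g x → T g = fderiv ℝ g x v) :
    IsCompactlySupportedDistribution Ω T := by
  refine ⟨{x}, isCompact_singleton, Set.singleton_subset_iff.2 hx, ‖v‖, norm_nonneg v, 1,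
    fun g hg => ?_⟩
  have hsup (i : ℕ) :
      ⨆ y : ({x} : Set E), ‖iteratedFDeriv ℝ i g (y : E)‖ = ‖iteratedFDeriv ℝ i g x‖ :=
    ciSup_unique
  simp only [hsup]
  calc
    |T g| = ‖fderiv ℝ g x v‖ := by rw [hT g (hg.differentiable (by simp) x), Real.norm_eq_abs]
    _ ≤ ‖v‖ * ‖iteratedFDeriv ℝ 1 g x‖ := by
      rw [norm_iteratedFDeriv_one, mul_comm]
      exact (fderiv ℝ g x).le_opNorm v
    _ ≤ ‖v‖ * ∑ i ∈ Finset.range (1 + 1), ‖iteratedFDeriv ℝ i g x‖ := by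
      gcongr
      exact Finset.single_le_sum (f := fun i => ‖iteratedFDeriv ℝ i g x‖)
        (fun _ _ => norm_nonneg _) (Finset.mem_range.2 one_lt_two)

lemma mul_rescale_eventuallyEq {φ : E → ℝ} (hφ : ∀ᶠ z in 𝓝 0, φ z = 1) (g : E → ℝ) (ε : ℝ)
    (x : E) :
    (fun y => g y * rescale ε φ (y - x)) =ᶠ[𝓝 x] fun y => g y * (ε ^ finrank ℝ E)⁻¹ := by
  have hlim : Tendsto (fun y => ε⁻¹ • (y - x)) (𝓝 x) (𝓝 0) :=
    Continuous.tendsto' (by fun_prop) _ _ (by simp)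
  filter_upwards [hlim.eventually hφ] with y hy
  rw [rescale, hy, mul_one]

lemma apply_mul_rescale_eq {T : (E → ℝ) →ₗ[ℝ] ℝ} {x v : E}
    (hT : ∀ g, DifferentiableAt ℝ g x → T g = fderiv ℝ g x v) {φ : E → ℝ}
    (hφ : ∀ᶠ z in 𝓝 0, φ z = 1) {g : E → ℝ} (hg : DifferentiableAt ℝ g x) (ε : ℝ) :
    T (fun y => g y * rescale ε φ (y - x)) = (ε ^ finrank ℝ E)⁻¹ * fderiv ℝ g x v := by
  have hlocal := mul_rescale_eventuallyEq hφ g ε x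
  rw [hT _ ((hg.mul_const _).congr_of_eventuallyEq hlocal), hlocal.fderiv_eq,
    fderiv_mul_const hg, smul_apply, smul_eq_mul]

lemma eq_zero_of_abs_inv_pow_mul_le {n : ℕ} (hn : n ≠ 0) {a C ε₀ : ℝ} (hε₀ : 0 < ε₀)
    (h : ∀ ε ∈ Set.Ioc 0 ε₀, |(ε ^ n)⁻¹ * a| ≤ C) : a = 0 := by
  have hbound : ∀ ε ∈ Set.Ioc 0 ε₀, |a| ≤ ε ^ n * C := fun ε hε => by
    have hpow : 0 < ε ^ n := pow_pos hε.1 n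
    rw [← inv_mul_le_iff₀ hpow, ← abs_of_pos (inv_pos.2 hpow), ← abs_mul]
    exact h ε hε
  have hlim : Tendsto (fun ε : ℝ => ε ^ n * C) (𝓝[>] 0) (𝓝 0) :=
    (Continuous.tendsto' (by fun_prop) _ _ (by simp [hn])).mono_left nhdsWithin_le_nhds
  exact abs_nonpos_iff.1 (ge_of_tendsto hlim (eventually_of_mem (Ioc_mem_nhdsGT hε₀) hbound))

theorem negligibility_forces_diagonal_derivatives_zero_general [FiniteDimensional ℝ E]
    [MeasurableSpace E] [BorelSpace E] (μ : Measure E) [μ.IsAddHaarMeasure] {Ω : Set E}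
    {f : E × E → ℝ} (hf : ∀ x ∈ Ω, DifferentiableAt ℝ (fun y => f (x, y)) x)
    (H : ∀ T, IsCompactlySupportedDistribution Ω T →
      IsNegligible μ Ω fun φ x => T fun y => f (x, y) * φ (y - x)) :
    ∀ x ∈ Ω, fderiv ℝ (fun y => f (x, y)) x = 0 := by
  intro x hx
  rcases subsingleton_or_nontrivial E with _ | _
  · exact Subsingleton.elim _ _
  ext v
  obtain ⟨T, hT⟩ := exists_linearMap_eq_fderiv_apply (𝕜 := ℝ) (F := ℝ) x v
  obtain ⟨q, hq⟩ := H T (isCompactlySupportedDistribution_of_eq_fderiv_apply hx hT) {x}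
    isCompact_singleton (Set.singleton_subset_iff.2 hx) 0
  obtain ⟨φ, hφ, hφ_one⟩ := exists_isMollifier_eventually_eq_one μ q
  obtain ⟨C, -, ε₀, hε₀, hbound⟩ := hq φ hφ
  refine eq_zero_of_abs_inv_pow_mul_le (C := C) (finrank_pos (R := ℝ) (M := E)).ne' hε₀
    fun ε hε => ?_
  simpa only [apply_mul_rescale_eq hT hφ_one (hf x hx), pow_zero, mul_one] using hbound ε hε x rfl

end Negligibility

/-- Let `Ω ⊆ ℝⁿ` be open and `f ∈ C^∞(Ω × Ω)`.  Suppose that for every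
compactly supported distribution `T ∈ E'(Ω)` (here: a linear functional on functions dominated
by finitely many `C^k`-seminorms on a compact subset of `Ω`) the generalized function
`(φ, x) ↦ ⟨T, f(x,·)·(S_ε φ)(·−x)⟩` is negligible: for every compact `K ⊆ Ω` and every `m`
there is `q` such that for every test function `φ` with unit integral and vanishing moments of
orders `1,…,q`, `sup_{x∈K} |⟨T, f(x,·)(S_ε φ)(·−x)⟩| = O(ε^m)`.  Then all first-order partial
derivatives of `f` in the second slot vanish on the diagonal. -/
theorem negligibility_forces_diagonal_derivatives_zero
    {n : ℕ} (hn : 0 < n) (Ω : Set (EuclideanSpace ℝ (Fin n))) (hΩ : IsOpen Ω)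
    (f : EuclideanSpace ℝ (Fin n) × EuclideanSpace ℝ (Fin n) → ℝ)
    (hf : ContDiffOn ℝ (⊤ : ℕ∞) f (Ω ×ˢ Ω))
    (H : ∀ T : (EuclideanSpace ℝ (Fin n) → ℝ) →ₗ[ℝ] ℝ,
      (∃ K' : Set (EuclideanSpace ℝ (Fin n)), IsCompact K' ∧ K' ⊆ Ω ∧
        ∃ C : ℝ, 0 ≤ C ∧ ∃ k : ℕ,
          ∀ g : EuclideanSpace ℝ (Fin n) → ℝ, ContDiff ℝ (⊤ : ℕ∞) g →
            |T g| ≤ C * ∑ i ∈ Finset.range (k + 1),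
              ⨆ x : K', ‖iteratedFDeriv ℝ i g (x : EuclideanSpace ℝ (Fin n))‖) →
      ∀ K : Set (EuclideanSpace ℝ (Fin n)), IsCompact K → K ⊆ Ω → ∀ m : ℕ, ∃ q : ℕ,
        ∀ φ : EuclideanSpace ℝ (Fin n) → ℝ, ContDiff ℝ (⊤ : ℕ∞) φ → HasCompactSupport φ →
          (∫ x, φ x) = 1 →
          (∀ α : Fin n → ℕ, 1 ≤ ∑ i, α i → ∑ i, α i ≤ q →
            (∫ x, (∏ i, x i ^ α i) * φ x) = 0) →
          ∃ C' > (0 : ℝ), ∃ ε₀ > (0 : ℝ), ∀ ε ∈ Set.Ioc (0 : ℝ) ε₀, ∀ x ∈ K,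
            |T (fun y => f (x, y) * (ε ^ n)⁻¹ * φ (ε⁻¹ • (y - x)))| ≤ C' * ε ^ m) :
    ∀ x ∈ Ω, ∀ i : Fin n,
      fderiv ℝ (fun y => f (x, y)) x (EuclideanSpace.single i 1) = 0 := by
  have hdiff : ∀ x ∈ Ω, DifferentiableAt ℝ (fun y => f (x, y)) x := fun x hx =>
    ((hf.contDiffAt ((hΩ.prod hΩ).mem_nhds ⟨hx, hx⟩)).differentiableAt (by simp)).comp x
      (by fun_prop)
  have hneg : ∀ T, IsCompactlySupportedDistribution Ω T →
      IsNegligible volume Ω fun φ x => T fun y => f (x, y) * φ (y - x) := by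
    intro T hT K hK hKΩ m
    obtain ⟨q, hq⟩ := H T hT K hK hKΩ m
    refine ⟨q, fun φ hφ => ?_⟩
    simpa only [rescale, finrank_euclideanSpace_fin, mul_assoc] using
      hq φ hφ.contDiff hφ.hasCompactSupport hφ.integral_eq_one hφ.integral_monomial_mul_eq_zero
  intro x hx i
  rw [negligibility_forces_diagonal_derivatives_zero_general volume hdiff hneg x hx,
    zero_apply]
end
end
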